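/- Let (X,d) be a finite metric space with n points, t > 0, and ζ_t : X × X → ℝ the matrix ζ_t(x,y) = exp(−t·d(x,y)). If ζ_t is invertible, then the magnitude |tX| = ∑_{x,y ∈ X} ζ_t⁻¹(x,y) satisfies: |tX| = ∑_{k=0}^{n-1} ∑_{γ} (-1)^k · ( det(ζ_t restricted to X ∖ range(γ)) / det ζ_t ) · ∏_{i=0}^{k-1} exp(−t·d(γ_i, γ_{i+1})), where the inner sum ranges over all injective sequences γ = (γ_0, γ_1, …, γ_k) of points of X (k-paths), ζ_t restricted to a subset S ⊆ X is the submatrix (ζ_t(x,y))_{x,y ∈ S}, the empty product (case k = 0) equals 1, and the determinant of the empty matrix equals 1. -/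

import Mathlib

attribute [local instance] Classical.propDecidable

/-! Let `w` solve `A w = v` with the rows and columns in `T` deleted. Cramer's rule, cleared of
denominators, expresses `w` at a point `x ∉ T` through `v x` and the solutions at the points
`z ∉ insert x T` of the system with `x` deleted as well, the coefficient of the latter being
`-A x z`. Iterating this recursion from `T = ∅` grows injective paths one point at a time. It stops
because a path has no room for more than `n` points. -/

section Cramer

open Matrix

variable {n R : Type*} [Fintype n] [DecidableEq n] [CommRing R]

theorem det_updateRow_updateRow_swap (M : Matrix n n R) {x y : n} (hxy : x ≠ y) (a b : n → R) :
    ((M.updateRow y a).updateRow x b).det = -((M.updateRow x a).updateRow y b).det := by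
  have hswap : (M.updateRow y a).updateRow x b =
      ((M.updateRow x a).updateRow y b).submatrix (Equiv.swap x y) id := by
    ext i j
    rcases eq_or_ne i x with rfl | hix
    · simp
    rcases eq_or_ne i y with rfl | hiy
    · simp [hix, hxy]
    · simp [Equiv.swap_apply_of_ne_of_ne, hix, hiy]
  rw [hswap, det_permute, Equiv.Perm.sign_swap hxy]
  simp

theorem adjugate_apply_eq_neg_sum (M : Matrix n n R) {x y : n} (hxy : x ≠ y) :
    M.adjugate x y = -∑ z, M x z * (M.updateRow x (Pi.single x 1)).adjugate z y := by
  rw [adjugate_apply, det_eq_sum_mul_adjugate_row _ x, ← Finset.sum_neg_distrib]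
  refine Finset.sum_congr rfl fun z _ => ?_
  rw [updateRow_ne hxy, adjugate_apply, adjugate_apply, det_updateRow_updateRow_swap M hxy,
    mul_neg]

theorem cramer_apply_eq_sub_sum (M : Matrix n n R) (b : n → R) (x : n) :
    M.cramer b x = b x * (M.updateRow x (Pi.single x 1)).det -
      ∑ z, M x z * (M.updateRow x (Pi.single x 1)).cramer (Function.update b x 0) z := by
  set N := M.updateRow x (Pi.single x 1)
  have hoff (y : n) : M.adjugate x y * Function.update b x 0 y =
      -∑ z, M x z * (N.adjugate z y * Function.update b x 0 y) := by
    rcases eq_or_ne y x with rfl | hy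
    · simp
    · rw [adjugate_apply_eq_neg_sum M hy.symm, neg_mul, Finset.sum_mul]
      simp only [mul_assoc, N]
  have hsplit : b = Pi.single x (b x) + Function.update b x 0 := by
    ext y
    rcases eq_or_ne y x with rfl | hy <;> simp [*]
  calc M.cramer b x
      = b x * M.adjugate x x + ∑ y, M.adjugate x y * Function.update b x 0 y := by
        conv_lhs => rw [hsplit, cramer_eq_adjugate_mulVec, mulVec_add]
        simp [mulVec, dotProduct]
    _ = b x * N.det - ∑ z, M x z * N.cramer (Function.update b x 0) z := by
        simp only [hoff, adjugate_apply M x x, Finset.sum_neg_distrib, N.cramer_eq_adjugate_mulVec,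
          mulVec, dotProduct, Finset.mul_sum]
        rw [Finset.sum_comm, sub_eq_add_neg]

theorem cramer_apply_of_row_eq_single {M : Matrix n n R} {z : n} (hM : M z = Pi.single z 1)
    (b : n → R) : M.cramer b z = M.det * b z := by
  have h := congrFun (M.mulVec_cramer b) z
  rwa [mulVec, hM, single_dotProduct, one_mul] at h

end Cramer

section IdentityRows

open Matrix

variable {X R : Type*} [Zero R] [One R]

/-- The matrix `A` with the rows indexed by `T` replaced by those of the identity. It stands for
the restriction of `A` to the complement of `T`, while keeping the index type fixed. -/
noncomputable def identityRows (A : Matrix X X R) (T : Set X) : Matrix X X R :=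
  of fun i => if i ∈ T then Pi.single i 1 else A i

theorem identityRows_apply_of_mem (A : Matrix X X R) {T : Set X} {z : X} (hz : z ∈ T) :
    identityRows A T z = Pi.single z 1 :=
  if_pos hz

theorem identityRows_apply_of_notMem (A : Matrix X X R) {T : Set X} {z : X} (hz : z ∉ T) :
    identityRows A T z = A z :=
  if_neg hz

theorem identityRows_empty (A : Matrix X X R) : identityRows A ∅ = A :=
  funext fun _ => identityRows_apply_of_notMem A (Set.notMem_empty _)

theorem identityRows_insert (A : Matrix X X R) (x : X) (T : Set X) :
    identityRows A (insert x T) = (identityRows A T).updateRow x (Pi.single x 1) := by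
  ext i j
  rcases eq_or_ne i x with rfl | hi
  · simp [identityRows]
  · simp [identityRows, hi]

end IdentityRows

section RestrictedCramer

open Matrix

variable {X R : Type*} [Fintype X] [CommRing R]

theorem det_identityRows (A : Matrix X X R) (T : Set X) [Fintype {v // v ∉ T}] :
    (identityRows A T).det = (A.submatrix ((↑) : {v // v ∉ T} → X) (↑)).det := by
  have hT : (identityRows A T).toSquareBlockProp (· ∈ T) = 1 := by
    ext i j
    simp [toSquareBlockProp, identityRows_apply_of_mem A i.2, one_apply, Pi.single_apply,
      Subtype.ext_iff, eq_comm]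
  have hTc : (identityRows A T).toSquareBlockProp (· ∉ T) = A.submatrix (↑) (↑) := by
    ext i j
    simp [toSquareBlockProp, identityRows_apply_of_notMem A i.2]
  rw [twoBlockTriangular_det' _ (· ∈ T), hT, hTc, det_one, one_mul]
  · congr!
  · intro i hi j hj
    have hji : j ≠ i := fun h => hj (h ▸ hi)
    rw [identityRows_apply_of_mem A hi, Pi.single_eq_of_ne hji]

/-- The Cramer numerators of the system `A w = v` restricted to the complement of `T`, extended
by zero to `T`. -/
noncomputable def restrictedCramer (A : Matrix X X R) (v : X → R) (T : Set X) : X → R :=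
  (identityRows A T).cramer (Tᶜ.indicator v)

theorem restrictedCramer_empty (A : Matrix X X R) (v : X → R) :
    restrictedCramer A v ∅ = A.cramer v := by
  rw [restrictedCramer, identityRows_empty, Set.compl_empty, Set.indicator_univ]

theorem restrictedCramer_of_mem (A : Matrix X X R) (v : X → R) {T : Set X} {z : X} (hz : z ∈ T) :
    restrictedCramer A v T z = 0 := by
  rw [restrictedCramer, cramer_apply_of_row_eq_single (identityRows_apply_of_mem A hz),
    Set.indicator_of_notMem (Set.notMem_compl_iff.mpr hz), mul_zero]

theorem restrictedCramer_of_notMem (A : Matrix X X R) (v : X → R) {T : Set X} {x : X}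
    (hx : x ∉ T) :
    restrictedCramer A v T x = v x * (identityRows A (insert x T)).det -
      ∑ z, A x z * restrictedCramer A v (insert x T) z := by
  have hind : (insert x T)ᶜ.indicator v = Function.update (Tᶜ.indicator v) x 0 := by
    ext i
    rcases eq_or_ne i x with rfl | hi <;> simp [Set.indicator_apply, *]
  rw [restrictedCramer, cramer_apply_eq_sub_sum, ← identityRows_insert, ← hind,
    identityRows_apply_of_notMem A hx, Set.indicator_of_mem (Set.mem_compl hx), restrictedCramer]

end RestrictedCramer

section Paths

variable {X R : Type*}

theorem range_eq_insert_last_range_init {k : ℕ} (γ : Fin (k + 1) → X) :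
    Set.range γ = insert (γ (Fin.last k)) (Set.range (Fin.init γ : Fin k → X)) := by
  ext a
  simp [Fin.exists_fin_succ', Fin.init, eq_comm, or_comm]

theorem last_notMem_range_init {k : ℕ} {γ : Fin (k + 1) → X} (hγ : Function.Injective γ) :
    γ (Fin.last k) ∉ Set.range (Fin.init γ : Fin k → X) := by
  rintro ⟨i, hi⟩
  exact (Fin.castSucc_lt_last i).ne (hγ hi)

theorem sum_injective_eq_sum_snoc {M : Type*} [AddCommMonoid M] [Fintype X] (k : ℕ)
    (f : (Fin (k + 1) → X) → M) :
    ∑ γ with Function.Injective γ, f γ =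
      ∑ γ : Fin k → X with Function.Injective γ, ∑ z with z ∉ Set.range γ, f (Fin.snoc γ z) := by
  have hsnoc (γ : Fin k → X) (z : X) :
      Fin.snocEquiv (fun _ : Fin (k + 1) => X) (z, γ) = (Fin.snoc γ z : Fin (k + 1) → X) := rfl
  simp only [Finset.sum_filter]
  rw [← (Fin.snocEquiv fun _ : Fin (k + 1) => X).sum_comp, Fintype.sum_prod_type_right]
  refine Finset.sum_congr rfl fun γ _ => ?_
  by_cases hγ : Function.Injective γ <;> simp [hsnoc, Fin.snoc_injective_iff, hγ]

/-- The weight `∏ A (γ i) (γ (i + 1))` of a path `γ` along the entries of `A`. -/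
def pathWeight [CommMonoid R] (A : Matrix X X R) {k : ℕ} (γ : Fin (k + 1) → X) : R :=
  ∏ i : Fin k, A (γ i.castSucc) (γ i.succ)

theorem pathWeight_snoc [CommMonoid R] (A : Matrix X X R) {k : ℕ} (γ : Fin (k + 1) → X)
    (z : X) :
    pathWeight A (Fin.snoc γ z : Fin (k + 2) → X) = pathWeight A γ * A (γ (Fin.last k)) z := by
  simp only [pathWeight, Fin.prod_univ_castSucc (n := k), Fin.succ_castSucc, Fin.snoc_castSucc,
    Fin.succ_last, Fin.snoc_last]

variable [Fintype X] [CommRing R]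

/-- What is left of `∑ x, u x * A.cramer v x` once the contributions of all paths with fewer than
`k` steps have been split off. -/
noncomputable def pathRemainder (A : Matrix X X R) (u v : X → R) (k : ℕ) : R :=
  ∑ γ : Fin (k + 1) → X with Function.Injective γ, (-1) ^ k * u (γ 0) * pathWeight A γ *
    restrictedCramer A v (Set.range (Fin.init γ : Fin k → X)) (γ (Fin.last k))

theorem pathRemainder_zero (A : Matrix X X R) (u v : X → R) :
    pathRemainder A u v 0 = ∑ x, u x * A.cramer v x := by
  rw [pathRemainder, Finset.filter_true_of_mem fun γ _ i j _ => Subsingleton.elim (α := Fin 1) i j,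
    ← (Equiv.funUnique (Fin 1) X).symm.sum_comp]
  simp [pathWeight, Set.range_eq_empty, restrictedCramer_empty]

theorem pathRemainder_card (A : Matrix X X R) (u v : X → R) :
    pathRemainder A u v (Fintype.card X) = 0 := by
  refine Finset.sum_eq_zero fun γ hγ => absurd ?_ (Nat.not_succ_le_self (Fintype.card X))
  simpa using Fintype.card_le_of_injective γ (Finset.mem_filter.mp hγ).2

theorem pathRemainder_sub_succ (A : Matrix X X R) (u v : X → R) (k : ℕ) :
    pathRemainder A u v k - pathRemainder A u v (k + 1) =
      ∑ γ : Fin (k + 1) → X with Function.Injective γ,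
        (-1) ^ k * (identityRows A (Set.range γ)).det *
          (u (γ 0) * pathWeight A γ * v (γ (Fin.last k))) := by
  rw [pathRemainder, pathRemainder, sum_injective_eq_sum_snoc (k + 1), ← Finset.sum_sub_distrib]
  refine Finset.sum_congr rfl fun γ hγ => ?_
  have hsnoc_zero (z : X) : (Fin.snoc γ z : Fin (k + 2) → X) 0 = γ 0 :=
    Fin.snoc_castSucc (α := fun _ => X) z γ 0
  have hext : ∑ z with z ∉ Set.range γ, (-1) ^ (k + 1) * u (γ 0) *
        (pathWeight A γ * A (γ (Fin.last k)) z) * restrictedCramer A v (Set.range γ) z =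
      -((-1) ^ k * u (γ 0) * pathWeight A γ *
        ∑ z, A (γ (Fin.last k)) z * restrictedCramer A v (Set.range γ) z) := by
    rw [Finset.mul_sum, ← Finset.sum_neg_distrib, Finset.sum_filter]
    refine Finset.sum_congr rfl fun z _ => ?_
    split_ifs with hz
    · rw [restrictedCramer_of_mem A v hz, mul_zero, mul_zero, neg_zero]
    · ring
  rw [restrictedCramer_of_notMem A v (last_notMem_range_init (Finset.mem_filter.mp hγ).2),
    ← range_eq_insert_last_range_init]
  simp only [hsnoc_zero, pathWeight_snoc, Fin.init_snoc, Fin.snoc_last, hext]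
  ring

theorem sum_mul_cramer_eq_sum_paths (A : Matrix X X R) (u v : X → R) :
    ∑ x, u x * A.cramer v x =
      ∑ k ∈ Finset.range (Fintype.card X), ∑ γ : Fin (k + 1) → X with Function.Injective γ,
        (-1) ^ k * (A.submatrix ((↑) : {v // v ∉ Set.range γ} → X) (↑)).det *
          (u (γ 0) * pathWeight A γ * v (γ (Fin.last k))) := by
  simp only [← det_identityRows, ← pathRemainder_sub_succ]
  rw [Finset.sum_range_sub', pathRemainder_zero, pathRemainder_card, sub_zero]

end Paths

theorem stmt12_general {X K : Type*} [Fintype X] [Field K] (A : Matrix X X K)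
    (hA : IsUnit A.det) :
    ∑ x, ∑ y, A⁻¹ x y =
      ∑ k ∈ Finset.range (Fintype.card X),
        ∑ γ : Fin (k + 1) → X with Function.Injective γ,
          (-1) ^ k *
            ((A.submatrix ((↑) : {v // v ∉ Set.range γ} → X) (↑)).det / A.det) *
            ∏ i : Fin k, A (γ i.castSucc) (γ i.succ) := by
  have hpaths := sum_mul_cramer_eq_sum_paths A 1 1
  simp only [pathWeight, Pi.one_apply, one_mul, mul_one] at hpaths
  have hcramer : A.det * ∑ x, ∑ y, A⁻¹ x y = ∑ x, A.cramer 1 x := by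
    rw [← A.det_smul_inv_mulVec_eq_cramer 1 hA]
    simp [Matrix.mulVec, dotProduct, Finset.mul_sum]
  rw [eq_div_of_mul_eq hA.ne_zero ((mul_comm _ _).trans (hcramer.trans hpaths))]
  simp only [Finset.sum_div]
  refine Finset.sum_congr rfl fun k _ => Finset.sum_congr rfl fun γ _ => ?_
  rw [mul_div_assoc', div_mul_eq_mul_div]

theorem stmt12 {X : Type*} [MetricSpace X] [Fintype X] (t : ℝ) (ht : 0 < t)
    (hinv : IsUnit (Matrix.of fun x y : X => Real.exp (-t * dist x y)).det) :
    ∑ x : X, ∑ y : X, (Matrix.of fun x y : X => Real.exp (-t * dist x y))⁻¹ x y =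
      ∑ k ∈ Finset.range (Fintype.card X),
        ∑ γ ∈ Finset.univ.filter (fun γ : Fin (k + 1) → X => Function.Injective γ),
          (-1 : ℝ) ^ k *
            ((Matrix.of fun x y : {v : X // v ∉ Set.range γ} =>
                Real.exp (-t * dist x.1 y.1)).det /
              (Matrix.of fun x y : X => Real.exp (-t * dist x y)).det) *
            ∏ i : Fin k, Real.exp (-t * dist (γ i.castSucc) (γ i.succ)) :=
  stmt12_general _ hinv
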